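/- arXiv:math/0011145 — 2 statements merged into one kernel-verified Lean document; each statement's English description precedes it below -/
import Mathlib

section
/- For the rational limit R-matrix on ℂ^N ⊗ V evaluated in the vector representation V = U: R_{UU}(λ) = ∑_{a,b} E_{aa}⊗E_{bb} - ∑_{a<b} (E_{aa}⊗E_{bb})/λ_{ab}² - ∑_{a≠b} (E_{ab}⊗E_{ba})/λ_{ab} satisfies the dynamical Yang–Baxter equation R^{12}(λ-h^{(3)}) R^{13}(λ) R^{23}(λ-h^{(1)}) = R^{23}(λ) R^{13}(λ-h^{(2)}) R^{12}(λ) on (ℂ^N)^{⊗3}. -/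
/-- The rational limit R-matrix in the vector representation:
`R_{UU}(λ) = ∑_{a,b} E_{aa}⊗E_{bb} - ∑_{a<b} (E_{aa}⊗E_{bb})/λ_{ab}²
- ∑_{a≠b} (E_{ab}⊗E_{ba})/λ_{ab}`. -/
noncomputable def RUU (N : ℕ) (lam : Fin N → ℂ) :
    Matrix (Fin N × Fin N) (Fin N × Fin N) ℂ := fun p q =>
  (if p = q then 1 - (if p.1 < p.2 then 1 / (lam p.1 - lam p.2) ^ 2 else 0) else 0) -
    (if p.1 ≠ p.2 ∧ p.1 = q.2 ∧ p.2 = q.1 then 1 / (lam p.1 - lam p.2) else 0)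

/-- Weight of the `a`-th basis vector of the vector representation `ℂ^N`. -/
noncomputable def epsv (N : ℕ) (a : Fin N) : Fin N → ℂ := fun c => if c = a then 1 else 0

/-- `R^{12}(λ - sh(third factor))` on the triple tensor product. -/
noncomputable def R12op (N : ℕ) (lam : Fin N → ℂ) (sh : Fin N → Fin N → ℂ) :
    Matrix (Fin N × Fin N × Fin N) (Fin N × Fin N × Fin N) ℂ := fun p q =>
  if p.2.2 = q.2.2 then RUU N (fun c => lam c - sh p.2.2 c) (p.1, p.2.1) (q.1, q.2.1) else 0

/-- `R^{13}(λ - sh(second factor))`. -/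
noncomputable def R13op (N : ℕ) (lam : Fin N → ℂ) (sh : Fin N → Fin N → ℂ) :
    Matrix (Fin N × Fin N × Fin N) (Fin N × Fin N × Fin N) ℂ := fun p q =>
  if p.2.1 = q.2.1 then RUU N (fun c => lam c - sh p.2.1 c) (p.1, p.2.2) (q.1, q.2.2) else 0

/-- `R^{23}(λ - sh(first factor))`. -/
noncomputable def R23op (N : ℕ) (lam : Fin N → ℂ) (sh : Fin N → Fin N → ℂ) :
    Matrix (Fin N × Fin N × Fin N) (Fin N × Fin N × Fin N) ℂ := fun p q =>
  if p.1 = q.1 then RUU N (fun c => lam c - sh p.1 c) (p.2.1, p.2.2) (q.2.1, q.2.2) else 0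

/-!
Left multiplication by `R_{UU}` mixes the row `(a, b)` only with the row `(b, a)`, so the row
`(a, b, c)` of each side of the equation has six coefficients. Write `α_{ab}` for the diagonal entry
of `R_{UU}` in the row `(a, b)`, with `α_{aa} = 1`, and `β_{ab} = -1/λ_{ab}` for the coefficient of
`E_{ab} ⊗ E_{ba}`. For distinct `a, b, c` the shifts are invisible, and comparing coefficients
leaves unitarity `α_{ab} α_{ba} = 1 - β_{ab}²` and the partial fraction identity
`β_{ab} β_{bc} = β_{ac} (β_{ab} + β_{bc})`. When exactly two indices coincide, it leaves unitarity
and the difference equation `β_{ab}(λ - ε_a) (1 + β_{ab}(λ)) = β_{ab}(λ)`. Apart from shift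
invariance, only the products `α_{ab} α_{ba}` enter, so the order on the indices fixes a gauge.
-/

variable {ι R : Type*}

section Legs

variable [DecidableEq ι] [Zero R]

/-- The operator `A^{12}(h^{(3)})` on a triple tensor product, for a family `A` of operators on the
double tensor product indexed by the basis vector in the remaining factor. -/
def leg12 (A : ι → Matrix (ι × ι) (ι × ι) R) : Matrix (ι × ι × ι) (ι × ι × ι) R :=
  fun p q => if p.2.2 = q.2.2 then A p.2.2 (p.1, p.2.1) (q.1, q.2.1) else 0

/-- The operator `A^{13}(h^{(2)})` on a triple tensor product; see `leg12`. -/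
def leg13 (A : ι → Matrix (ι × ι) (ι × ι) R) : Matrix (ι × ι × ι) (ι × ι × ι) R :=
  fun p q => if p.2.1 = q.2.1 then A p.2.1 (p.1, p.2.2) (q.1, q.2.2) else 0

/-- The operator `A^{23}(h^{(1)})` on a triple tensor product; see `leg12`. -/
def leg23 (A : ι → Matrix (ι × ι) (ι × ι) R) : Matrix (ι × ι × ι) (ι × ι × ι) R :=
  fun p q => if p.1 = q.1 then A p.1 (p.2.1, p.2.2) (q.2.1, q.2.2) else 0

end Legs

section DynamicalYangBaxter

variable [Fintype ι] [DecidableEq ι] [NonUnitalNonAssocSemiring R]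

/-- The side `R^{12}(λ-h^{(3)}) R^{13}(λ) R^{23}(λ-h^{(1)})` of the dynamical Yang–Baxter equation
at a fixed dynamical parameter `λ`, where `A` stands for `R(λ)` and `A' c` for `R(λ - ε_c)`. -/
def yangBaxterLeft (A : Matrix (ι × ι) (ι × ι) R) (A' : ι → Matrix (ι × ι) (ι × ι) R) :
    Matrix (ι × ι × ι) (ι × ι × ι) R :=
  leg12 A' * leg13 (fun _ => A) * leg23 A'

/-- The side `R^{23}(λ) R^{13}(λ-h^{(2)}) R^{12}(λ)` of the dynamical Yang–Baxter equation, with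
`A` and `A'` as in `yangBaxterLeft`. -/
def yangBaxterRight (A : Matrix (ι × ι) (ι × ι) R) (A' : ι → Matrix (ι × ι) (ι × ι) R) :
    Matrix (ι × ι × ι) (ι × ι × ι) R :=
  leg23 (fun _ => A) * leg13 A' * leg12 (fun _ => A)

/-- The dynamical Yang–Baxter equation at a fixed dynamical parameter, with `A` and `A'` as in
`yangBaxterLeft`. -/
def DynamicalYangBaxter (A : Matrix (ι × ι) (ι × ι) R)
    (A' : ι → Matrix (ι × ι) (ι × ι) R) : Prop :=
  yangBaxterLeft A A' = yangBaxterRight A A'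

end DynamicalYangBaxter

/-- The matrix `∑ α_{ab} E_{aa} ⊗ E_{bb} + ∑ β_{ab} E_{ab} ⊗ E_{ba}`, the general form of a
zero-weight operator that maps `e_a ⊗ e_b` into the span of `e_a ⊗ e_b` and `e_b ⊗ e_a`. -/
def exchangeMatrix [DecidableEq ι] [AddZeroClass R] (α β : ι → ι → R) :
    Matrix (ι × ι) (ι × ι) R :=
  fun p q => (if p = q then α p.1 p.2 else 0) + (if p = q.swap then β p.1 p.2 else 0)

lemma exchangeMatrix_apply [DecidableEq ι] [AddZeroClass R] (α β : ι → ι → R) (a b c d : ι) :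
    exchangeMatrix α β (a, b) (c, d) =
      (if a = c then if b = d then α a b else 0 else 0) +
        (if a = d then if b = c then β a b else 0 else 0) := by
  simp only [exchangeMatrix, Prod.swap_prod_mk, Prod.mk.injEq, ite_and]

section RowExpansion

variable [Fintype ι] [DecidableEq ι]

section Mul

variable {n : Type*} [NonUnitalNonAssocSemiring R] (α β : ι → ι → ι → R)
  (M : Matrix (ι × ι × ι) n R) (a b c : ι) (q : n)

lemma leg12_exchangeMatrix_mul_apply :
    (leg12 (fun i => exchangeMatrix (α i) (β i)) * M) (a, b, c) q =
      α c a b * M (a, b, c) q + β c a b * M (b, a, c) q := by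
  simp [Matrix.mul_apply, leg12, exchangeMatrix_apply, Fintype.sum_prod_type, add_mul, ite_mul,
    Finset.sum_add_distrib, Finset.sum_ite_irrel]

lemma leg13_exchangeMatrix_mul_apply :
    (leg13 (fun i => exchangeMatrix (α i) (β i)) * M) (a, b, c) q =
      α b a c * M (a, b, c) q + β b a c * M (c, b, a) q := by
  simp [Matrix.mul_apply, leg13, exchangeMatrix_apply, Fintype.sum_prod_type, add_mul, ite_mul,
    Finset.sum_add_distrib, Finset.sum_ite_irrel]

lemma leg23_exchangeMatrix_mul_apply :
    (leg23 (fun i => exchangeMatrix (α i) (β i)) * M) (a, b, c) q =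
      α a b c * M (a, b, c) q + β a b c * M (a, c, b) q := by
  simp [Matrix.mul_apply, leg23, exchangeMatrix_apply, Fintype.sum_prod_type, add_mul, ite_mul,
    Finset.sum_add_distrib, Finset.sum_ite_irrel]

end Mul

variable [CommSemiring R] (α β : ι → ι → R) (α' β' : ι → ι → ι → R) (a b c : ι) (q : ι × ι × ι)

lemma yangBaxterLeft_exchangeMatrix_apply :
    yangBaxterLeft (exchangeMatrix α β) (fun i => exchangeMatrix (α' i) (β' i)) (a, b, c) q =
      α' c a b * α a c * α' a b c * (1 : Matrix _ _ R) (a, b, c) q +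
      α' c a b * α a c * β' a b c * (1 : Matrix _ _ R) (a, c, b) q +
      β' c a b * α b c * α' b a c * (1 : Matrix _ _ R) (b, a, c) q +
      β' c a b * α b c * β' b a c * (1 : Matrix _ _ R) (b, c, a) q +
      (α' c a b * β a c * β' c b a + β' c a b * β b c * α' c a b) *
        (1 : Matrix _ _ R) (c, a, b) q +
      (α' c a b * β a c * α' c b a + β' c a b * β b c * β' c a b) *
        (1 : Matrix _ _ R) (c, b, a) q := by
  rw [yangBaxterLeft, ← Matrix.mul_one (_ * _ * _), Matrix.mul_assoc, Matrix.mul_assoc,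
    leg12_exchangeMatrix_mul_apply]
  simp only [leg13_exchangeMatrix_mul_apply, leg23_exchangeMatrix_mul_apply]
  ring

lemma yangBaxterRight_exchangeMatrix_apply :
    yangBaxterRight (exchangeMatrix α β) (fun i => exchangeMatrix (α' i) (β' i)) (a, b, c) q =
      α b c * α' b a c * α a b * (1 : Matrix _ _ R) (a, b, c) q +
      β b c * α' c a b * α a c * (1 : Matrix _ _ R) (a, c, b) q +
      α b c * α' b a c * β a b * (1 : Matrix _ _ R) (b, a, c) q +
      (α b c * β' b a c * β c b + β b c * β' c a b * α b c) * (1 : Matrix _ _ R) (b, c, a) q +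
      β b c * α' c a b * β a c * (1 : Matrix _ _ R) (c, a, b) q +
      (α b c * β' b a c * α c b + β b c * β' c a b * β b c) *
        (1 : Matrix _ _ R) (c, b, a) q := by
  rw [yangBaxterRight, ← Matrix.mul_one (_ * _ * _), Matrix.mul_assoc, Matrix.mul_assoc,
    leg23_exchangeMatrix_mul_apply]
  simp only [leg13_exchangeMatrix_mul_apply, leg12_exchangeMatrix_mul_apply]
  ring

end RowExpansion

/-- The coefficients `α, β` make `exchangeMatrix α β` a unitary R-matrix with trivial diagonal:
it fixes every `e_a ⊗ e_a` and satisfies `R R^{21} = 1`. -/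
structure IsUnitaryExchange [CommRing R] (α β : ι → ι → R) : Prop where
  diag_self (a : ι) : α a a = 1
  swap_self (a : ι) : β a a = 0
  swap_antisymm (a b : ι) : β b a = -β a b
  diag_mul_diag (a b : ι) : α a b * α b a = 1 - β a b ^ 2

/-- The relations by which a unitary exchange matrix solves the dynamical Yang–Baxter equation, with
`α, β` its coefficients at `λ` and `α' c, β' c` those at `λ - ε_c`; the `(a, b)` coefficients are
required to be invariant under the shifts by `ε_c` with `c ≠ a, b`. -/
structure IsDynamicalExchange [CommRing R] (α β : ι → ι → R) (α' β' : ι → ι → ι → R) :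
    Prop where
  unitary : IsUnitaryExchange α β
  unitary_shift (c : ι) : IsUnitaryExchange (α' c) (β' c)
  diag_shift {a b c : ι} (ha : c ≠ a) (hb : c ≠ b) : α' c a b = α a b
  swap_shift {a b c : ι} (ha : c ≠ a) (hb : c ≠ b) : β' c a b = β a b
  swap_shift_left (a b : ι) : β' a a b * (1 + β a b) = β a b
  swap_mul_swap {a b c : ι} (hab : a ≠ b) (hbc : b ≠ c) (hac : a ≠ c) :
    β a b * β b c = β a c * (β a b + β b c)

namespace IsDynamicalExchange

variable [CommRing R] {α β : ι → ι → R} {α' β' : ι → ι → ι → R}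

lemma swap_shift_right (h : IsDynamicalExchange α β α' β') (a b : ι) :
    β' b a b = β a b * (1 + β' b a b) := by
  have hba := h.swap_shift_left b a
  rw [h.unitary.swap_antisymm a b, (h.unitary_shift b).swap_antisymm a b] at hba
  linear_combination -hba

variable [Fintype ι] [DecidableEq ι]

lemma yangBaxter_apply_of_ne (h : IsDynamicalExchange α β α' β') {a b c : ι}
    (hab : a ≠ b) (hbc : b ≠ c) (hac : a ≠ c) (q : ι × ι × ι) :
    yangBaxterLeft (exchangeMatrix α β) (fun i => exchangeMatrix (α' i) (β' i)) (a, b, c) q =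
      yangBaxterRight (exchangeMatrix α β) (fun i => exchangeMatrix (α' i) (β' i)) (a, b, c) q := by
  have hβ := h.swap_mul_swap hab hbc hac
  have hαab := h.unitary.diag_mul_diag a b
  have hαbc := h.unitary.diag_mul_diag b c
  simp only [yangBaxterLeft_exchangeMatrix_apply, yangBaxterRight_exchangeMatrix_apply,
    h.diag_shift hab hac, h.diag_shift hab.symm hbc, h.diag_shift hac.symm hbc.symm,
    h.diag_shift hbc.symm hac.symm, h.swap_shift hab hac, h.swap_shift hab.symm hbc,
    h.swap_shift hac.symm hbc.symm, h.swap_shift hbc.symm hac.symm,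
    h.unitary.swap_antisymm a b, h.unitary.swap_antisymm b c]
  linear_combination
    -α b c * (1 : Matrix _ _ R) (b, c, a) q * hβ + α a b * (1 : Matrix _ _ R) (c, a, b) q * hβ +
      (1 : Matrix _ _ R) (c, b, a) q * (β a c * (hαab - hαbc) + (β a b - β b c) * hβ)

lemma yangBaxter_apply_self_left (h : IsDynamicalExchange α β α' β') (a c : ι) (q : ι × ι × ι) :
    yangBaxterLeft (exchangeMatrix α β) (fun i => exchangeMatrix (α' i) (β' i)) (a, a, c) q =
      yangBaxterRight (exchangeMatrix α β) (fun i => exchangeMatrix (α' i) (β' i)) (a, a, c) q := by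
  have hβ := h.swap_shift_left a c
  have hα := h.unitary.diag_mul_diag a c
  simp only [yangBaxterLeft_exchangeMatrix_apply, yangBaxterRight_exchangeMatrix_apply,
    h.unitary.diag_self, h.unitary.swap_self, (h.unitary_shift _).diag_self,
    (h.unitary_shift _).swap_self, h.unitary.swap_antisymm a c]
  linear_combination
    α a c * (1 : Matrix _ _ R) (a, c, a) q * hβ +
      (1 : Matrix _ _ R) (c, a, a) q * (-(1 - β a c) * hβ - β' a a c * hα)

lemma yangBaxter_apply_self_right (h : IsDynamicalExchange α β α' β') (a b : ι) (q : ι × ι × ι) :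
    yangBaxterLeft (exchangeMatrix α β) (fun i => exchangeMatrix (α' i) (β' i)) (a, b, b) q =
      yangBaxterRight (exchangeMatrix α β) (fun i => exchangeMatrix (α' i) (β' i)) (a, b, b) q := by
  have hβ := h.swap_shift_right a b
  have hα := (h.unitary_shift b).diag_mul_diag a b
  simp only [yangBaxterLeft_exchangeMatrix_apply, yangBaxterRight_exchangeMatrix_apply,
    h.unitary.diag_self, h.unitary.swap_self, (h.unitary_shift _).diag_self,
    (h.unitary_shift _).swap_self, (h.unitary_shift b).swap_antisymm a b]
  linear_combination
    α' b a b * (1 : Matrix _ _ R) (b, a, b) q * hβ +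
      (1 : Matrix _ _ R) (b, b, a) q * (-(1 - β' b a b) * hβ + β a b * hα)

lemma yangBaxter_apply_self_outer (h : IsDynamicalExchange α β α' β') (a b : ι) (q : ι × ι × ι) :
    yangBaxterLeft (exchangeMatrix α β) (fun i => exchangeMatrix (α' i) (β' i)) (a, b, a) q =
      yangBaxterRight (exchangeMatrix α β) (fun i => exchangeMatrix (α' i) (β' i)) (a, b, a) q := by
  have hβ := h.swap_shift_left a b
  have hα := h.unitary.diag_mul_diag a b
  have hα' := (h.unitary_shift a).diag_mul_diag a b
  simp only [yangBaxterLeft_exchangeMatrix_apply, yangBaxterRight_exchangeMatrix_apply,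
    h.unitary.diag_self, h.unitary.swap_self, (h.unitary_shift _).diag_self,
    (h.unitary_shift _).swap_self, h.unitary.swap_antisymm a b,
    (h.unitary_shift a).swap_antisymm a b]
  linear_combination
    (1 : Matrix _ _ R) (a, b, a) q * (hα' - hα - (β' a a b + β a b) * hβ) -
      α' a a b * (1 : Matrix _ _ R) (a, a, b) q * hβ +
      α b a * (1 : Matrix _ _ R) (b, a, a) q * hβ

theorem dynamicalYangBaxter (h : IsDynamicalExchange α β α' β') :
    DynamicalYangBaxter (exchangeMatrix α β) fun i => exchangeMatrix (α' i) (β' i) := by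
  ext ⟨a, b, c⟩ q
  rcases eq_or_ne a b with rfl | hab
  · exact h.yangBaxter_apply_self_left a c q
  rcases eq_or_ne b c with rfl | hbc
  · exact h.yangBaxter_apply_self_right a b q
  rcases eq_or_ne a c with rfl | hac
  · exact h.yangBaxter_apply_self_outer a b q
  exact h.yangBaxter_apply_of_ne hab hbc hac q

end IsDynamicalExchange

section Rational

variable {K : Type*} [Field K]

/-- The coefficient of `E_{aa} ⊗ E_{bb}` in the rational R-matrix. -/
def rationalDiag [LT ι] [DecidableLT ι] (lam : ι → K) (a b : ι) : K :=
  1 - if a < b then 1 / (lam a - lam b) ^ 2 else 0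

/-- The coefficient of `E_{ab} ⊗ E_{ba}` in the rational R-matrix for `a ≠ b`. At `a = b` it is
`0`, by the convention `1 / 0 = 0`. -/
def rationalSwap (lam : ι → K) (a b : ι) : K :=
  -(1 / (lam a - lam b))

/-- The rational R-matrix over any field, with the basis of the vector representation indexed by any
linear order; see `RUU_eq_rationalRMatrix`. -/
def rationalRMatrix [LinearOrder ι] (lam : ι → K) : Matrix (ι × ι) (ι × ι) K :=
  exchangeMatrix (rationalDiag lam) (rationalSwap lam)

lemma isUnitaryExchange_rational [LinearOrder ι] (lam : ι → K) :
    IsUnitaryExchange (rationalDiag lam) (rationalSwap lam) where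
  diag_self a := by simp [rationalDiag]
  swap_self a := by simp [rationalSwap]
  swap_antisymm a b := by rw [rationalSwap, rationalSwap, ← neg_sub (lam a), div_neg]
  diag_mul_diag a b := by
    rcases lt_trichotomy a b with hab | rfl | hab
    · simp [rationalDiag, rationalSwap, hab, hab.not_gt]
    · simp [rationalDiag, rationalSwap]
    · simp [rationalDiag, rationalSwap, hab, hab.not_gt, sub_sq_comm (lam a)]

lemma rationalSwap_mul_rationalSwap {lam : ι → K} (hlam : Function.Injective lam) {a b c : ι}
    (hab : a ≠ b) (hbc : b ≠ c) (hac : a ≠ c) :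
    rationalSwap lam a b * rationalSwap lam b c =
      rationalSwap lam a c * (rationalSwap lam a b + rationalSwap lam b c) := by
  have hab' : lam a - lam b ≠ 0 := sub_ne_zero.mpr (hlam.ne hab)
  have hbc' : lam b - lam c ≠ 0 := sub_ne_zero.mpr (hlam.ne hbc)
  have hac' : lam a - lam c ≠ 0 := sub_ne_zero.mpr (hlam.ne hac)
  unfold rationalSwap
  field_simp
  ring

section Shift

variable [DecidableEq ι]

lemma rationalDiag_sub_single [LT ι] [DecidableLT ι] (lam : ι → K) (t : K) {a b c : ι}
    (ha : c ≠ a) (hb : c ≠ b) :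
    rationalDiag (lam - Pi.single c t) a b = rationalDiag lam a b := by
  simp [rationalDiag, Pi.single_eq_of_ne' ha, Pi.single_eq_of_ne' hb]

lemma rationalSwap_sub_single (lam : ι → K) (t : K) {a b c : ι} (ha : c ≠ a) (hb : c ≠ b) :
    rationalSwap (lam - Pi.single c t) a b = rationalSwap lam a b := by
  simp [rationalSwap, Pi.single_eq_of_ne' ha, Pi.single_eq_of_ne' hb]

lemma rationalSwap_sub_single_left_mul {lam : ι → K} (hlam : Function.Injective lam)
    (hone : ∀ a b, lam a - lam b ≠ 1) (a b : ι) :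
    rationalSwap (lam - Pi.single a 1) a b * (1 + rationalSwap lam a b) = rationalSwap lam a b := by
  rcases eq_or_ne a b with rfl | hab
  · simp [rationalSwap]
  have hab₀ : lam a - lam b ≠ 0 := sub_ne_zero.mpr (hlam.ne hab)
  have hab₁ : lam a - lam b - 1 ≠ 0 := sub_ne_zero.mpr (hone a b)
  have hshift : rationalSwap (lam - Pi.single a 1) a b = -(1 / (lam a - lam b - 1)) := by
    simp [rationalSwap, Pi.single_eq_of_ne' hab, sub_right_comm]
  rw [hshift, rationalSwap]
  field_simp
  ring

end Shift

lemma isDynamicalExchange_rational [LinearOrder ι] {lam : ι → K} (hlam : Function.Injective lam)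
    (hone : ∀ a b, lam a - lam b ≠ 1) :
    IsDynamicalExchange (rationalDiag lam) (rationalSwap lam)
      (fun c => rationalDiag (lam - Pi.single c 1))
      (fun c => rationalSwap (lam - Pi.single c 1)) where
  unitary := isUnitaryExchange_rational lam
  unitary_shift _ := isUnitaryExchange_rational _
  diag_shift := rationalDiag_sub_single lam 1
  swap_shift := rationalSwap_sub_single lam 1
  swap_shift_left := rationalSwap_sub_single_left_mul hlam hone
  swap_mul_swap := rationalSwap_mul_rationalSwap hlam

theorem RUU_dynamical_Yang_Baxter_general [Fintype ι] [LinearOrder ι] {lam : ι → K}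
    (hlam : Function.Injective lam) (hone : ∀ a b, lam a - lam b ≠ 1) :
    DynamicalYangBaxter (rationalRMatrix lam) fun c => rationalRMatrix (lam - Pi.single c 1) :=
  (isDynamicalExchange_rational hlam hone).dynamicalYangBaxter

end Rational

section VectorRepresentation

variable (N : ℕ) (lam : Fin N → ℂ)

lemma RUU_eq_rationalRMatrix : RUU N lam = rationalRMatrix lam := by
  ext ⟨a, b⟩ ⟨c, d⟩
  rcases eq_or_ne a b with rfl | hab
  · simp [RUU, rationalRMatrix, exchangeMatrix, rationalDiag, rationalSwap]
  · simp [RUU, rationalRMatrix, exchangeMatrix, rationalDiag, rationalSwap, hab, sub_eq_add_neg,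
      neg_ite]

lemma epsv_eq_single (a : Fin N) : epsv N a = Pi.single a 1 := by
  ext c
  rw [epsv, Pi.single_apply]

variable (sh : Fin N → Fin N → ℂ)

lemma R12op_eq_leg12 : R12op N lam sh = leg12 fun c => rationalRMatrix (lam - sh c) := by
  simp only [← RUU_eq_rationalRMatrix]
  rfl

lemma R13op_eq_leg13 : R13op N lam sh = leg13 fun c => rationalRMatrix (lam - sh c) := by
  simp only [← RUU_eq_rationalRMatrix]
  rfl

lemma R23op_eq_leg23 : R23op N lam sh = leg23 fun c => rationalRMatrix (lam - sh c) := by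
  simp only [← RUU_eq_rationalRMatrix]
  rfl

end VectorRepresentation

/-- `R_{UU}(λ)` satisfies the dynamical Yang–Baxter equation
`R^{12}(λ-h^{(3)}) R^{13}(λ) R^{23}(λ-h^{(1)}) = R^{23}(λ) R^{13}(λ-h^{(2)}) R^{12}(λ)`
on `(ℂ^N)^{⊗3}`. -/
theorem RUU_dynamical_Yang_Baxter (N : ℕ) (lam : Fin N → ℂ)
    (hgen : ∀ a b : Fin N, a ≠ b →
      lam a - lam b ≠ 0 ∧ lam a - lam b ≠ 1 ∧ lam a - lam b ≠ -1) :
    R12op N lam (epsv N) * R13op N lam (fun _ _ => 0) * R23op N lam (epsv N) =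
      R23op N lam (fun _ _ => 0) * R13op N lam (epsv N) * R12op N lam (fun _ _ => 0) := by
  have hlam : Function.Injective lam := fun a b =>
    not_imp_not.1 fun hab => sub_ne_zero.1 (hgen a b hab).1
  have hone (a b : Fin N) : lam a - lam b ≠ 1 := by
    rcases eq_or_ne a b with rfl | hab
    · simp
    · exact (hgen a b hab).2.1
  simpa only [DynamicalYangBaxter, yangBaxterLeft, yangBaxterRight, R12op_eq_leg12,
    R13op_eq_leg13, R23op_eq_leg23, epsv_eq_single, ← Pi.zero_def, sub_zero]
    using RUU_dynamical_Yang_Baxter_general hlam hone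
end

section
/- Let v be a standard regular singular vector of weight μ in a module over the small elliptic quantum group e_{τ,γ}(sl_N), and let a < b. Then for any k ≥ 1, t̂_{ab} t̂_{ba}^k v = - [θ((μ_{ab}-k+1)γ) θ(kγ) / (θ(λ_{ab}) θ(λ_{ab}-(μ_{ab}-2k+2)γ))] · t̂_{ba}^{k-1} v. -/
/-- The Jacobi theta function. -/
noncomputable def jtheta (τ u : ℂ) : ℂ :=
  -∑' m : ℤ, Complex.exp ((Real.pi : ℂ) * Complex.I * τ * ((m : ℂ) + 1 / 2) ^ 2 +
      2 * (Real.pi : ℂ) * Complex.I * ((m : ℂ) + 1 / 2) * (u + 1 / 2))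

/-!
Moving a function past `t̂_{ba}` only shifts its arguments. With this, `θ(λ^{(1)}_{ab}) t̂_{aa}`
commutes with `t̂_{ba}`, and so does `t̂_{bb}` stripped of its factor in `λ^{(2)}`; hence
`t̂_{aa}` and `t̂_{bb}` act on `t̂_{ba}^k v` by explicit quotients of theta functions. The quadratic
relation between `t̂_{ab}` and `t̂_{ba}` then turns into a recursion in `k` for the coefficient of
`t̂_{ba}^{k-1} v` in `t̂_{ab} t̂_{ba}^k v`, and the stated coefficient solves it by Weierstrass's
three-term identity. That identity holds because `θ(x + y) θ(x - y)` is a `2 × 2` determinant in two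
theta functions of modulus `2τ`.
-/

section ThreeTermIdentity

/-- Weierstrass's three-term identity, the addition formula satisfied by odd theta functions. -/
def ThreeTermIdentity {K : Type*} [CommRing K] (θ : K → K) : Prop :=
  ∀ A B C D, θ (A + B) * θ (A - B) * (θ (C + D) * θ (C - D)) -
      θ (A + C) * θ (A - C) * (θ (B + D) * θ (B - D)) +
      θ (A + D) * θ (A - D) * (θ (B + C) * θ (B - C)) = 0

theorem ThreeTermIdentity.map_zero {K : Type*} [CommRing K] [NoZeroDivisors K] {θ : K → K}
    (hθ : ThreeTermIdentity θ) : θ 0 = 0 := by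
  have hfour : θ 0 * θ 0 * (θ 0 * θ 0) = 0 := by
    simpa only [add_zero, sub_zero, sub_self, zero_add] using hθ 0 0 0 0
  exact mul_self_eq_zero.1 (mul_self_eq_zero.1 hfour)

variable {K : Type*} [Field K] {θ : K → K}

/-- The coefficient of `t̂_{ba}^{k-1} v` in `t̂_{ab} t̂_{ba}^k v`, where `x` stands for
`λ_{ab}` and `y` for `γ μ_{ab}`. -/
def raisingCoeff (θ : K → K) (γ : K) (k : ℕ) (x y : K) : K :=
  -(θ (y - (k - 1) * γ) * θ (k * γ)) / (θ x * θ (x - y + (2 * k - 2) * γ))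

theorem raisingCoeff_zero {γ : K} (h0 : θ 0 = 0) (x y : K) : raisingCoeff θ γ 0 x y = 0 := by
  rw [raisingCoeff, Nat.cast_zero, zero_mul, h0, mul_zero, neg_zero, zero_div]

variable [NeZero (2 : K)]

theorem ThreeTermIdentity.odd (hθ : ThreeTermIdentity θ) : θ.Odd := by
  intro t
  by_cases hzero : ∀ u, θ u = 0
  · rw [hzero, hzero, neg_zero]
  obtain ⟨u, hu⟩ := not_forall.1 hzero
  -- Exchanging `C` and `D` exchanges the last two products and replaces `θ (C - D)` by
  -- `θ (D - C)`.
  have hCD := hθ u 0 ((u + t) / 2) ((u - t) / 2)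
  have hDC := hθ u 0 ((u - t) / 2) ((u + t) / 2)
  have hsum : (u + t) / 2 + (u - t) / 2 = u := by field
  have hdiff : (u + t) / 2 - (u - t) / 2 = t := by field
  rw [hsum, hdiff, add_zero, sub_zero] at hCD
  rw [add_comm ((u - t) / 2), hsum, ← neg_sub ((u + t) / 2) ((u - t) / 2), hdiff, add_zero,
    sub_zero] at hDC
  have hprod : θ u ^ 3 * (θ (-t) + θ t) = 0 := by linear_combination hCD + hDC
  exact eq_neg_of_add_eq_zero_left ((mul_eq_zero.1 hprod).resolve_left (pow_ne_zero 3 hu))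

theorem ThreeTermIdentity.mul_eq_add (hθ : ThreeTermIdentity θ) (x q s γ : K) :
    θ x * θ (q - γ) * (θ (x - q + s) * θ (s + γ)) =
      θ (x - γ) * θ q * (θ (x - q + s + γ) * θ s) +
        θ (x - q) * θ γ * (θ (q - γ - s) * θ (x + s)) := by
  obtain ⟨A, rfl⟩ : ∃ A, q = 2 * A - x + γ := ⟨(q + x - γ) / 2, by field⟩
  linear_combination (norm := ring_nf) -hθ A (x + s - A) (x - A) (x - γ - A)

theorem ThreeTermIdentity.raisingCoeff_succ (hθ : ThreeTermIdentity θ) {γ x y q : K} {k : ℕ}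
    (hq : q = x - y + 2 * k * γ) (hx : θ x ≠ 0) (hxγ : θ (x + γ) ≠ 0) (hθq : θ q ≠ 0)
    (hqγ : θ (q - γ) ≠ 0) :
    raisingCoeff θ γ (k + 1) x y =
      θ (x + γ) * θ (x - γ) / θ x ^ 2 * raisingCoeff θ γ k (x + γ) y -
        θ (x - q) * θ γ / (θ x * θ q) *
          (θ (q - γ - k * γ) / θ (q - γ) * (θ (x + k * γ) / θ x)) := by
  have hsucc : raisingCoeff θ γ (k + 1) x y =
      -(θ (x - q + k * γ) * θ (k * γ + γ)) / (θ x * θ q) := by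
    rw [raisingCoeff, hq]
    push_cast
    ring_nf
  have hshift : raisingCoeff θ γ k (x + γ) y =
      -(θ (x - q + k * γ + γ) * θ (k * γ)) / (θ (x + γ) * θ (q - γ)) := by
    rw [raisingCoeff, hq]
    ring_nf
  have hthree := hθ.mul_eq_add x q (k * γ) γ
  rw [hsucc, hshift]
  generalize (k : K) * γ = s at hthree ⊢
  field_simp
  linear_combination -hthree

end ThreeTermIdentity

section Generic

variable {K : Type*} [Ring K] {θ : K → K} {γ x : K} {r s : ℕ}

/-- Nonvanishing of `θ` at the points `x + jγ` with `|j| ≤ r`. -/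
def IsGeneric (θ : K → K) (γ : K) (r : ℕ) (x : K) : Prop :=
  ∀ j : ℤ, j.natAbs ≤ r → θ (x + j * γ) ≠ 0

theorem IsGeneric.mono (hx : IsGeneric θ γ r x) (hsr : s ≤ r) : IsGeneric θ γ s x :=
  fun j hj => hx j (hj.trans hsr)

theorem IsGeneric.add_right (hx : IsGeneric θ γ (r + 1) x) : IsGeneric θ γ r (x + γ) := by
  intro j hj
  convert hx (j + 1) (by omega) using 2
  push_cast
  rw [add_mul, one_mul, add_assoc, add_comm γ]

end Generic

section ThetaFunction

open Complex

open scoped Real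

/-- The decomposition of `ℤ × ℤ` by the parity of `m + n`, with `(m, n) = (r + s, r - s)` on the
even part and `(m, n) = (r + s + 1, r - s)` on the odd part. -/
def sumDiffEquiv : (ℤ × ℤ) ⊕ (ℤ × ℤ) ≃ ℤ × ℤ where
  toFun := Sum.elim (fun p => (p.1 + p.2, p.1 - p.2)) (fun p => (p.1 + p.2 + 1, p.1 - p.2))
  invFun p := if (p.1 + p.2) % 2 = 0 then Sum.inl ((p.1 + p.2) / 2, (p.1 - p.2) / 2)
    else Sum.inr ((p.1 + p.2 - 1) / 2, (p.1 - p.2 - 1) / 2)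
  left_inv := by
    rintro (⟨r, s⟩ | ⟨r, s⟩) <;> dsimp only [Sum.elim_inl, Sum.elim_inr]
    · rw [if_pos (by omega), Sum.inl.injEq, Prod.mk.injEq]
      omega
    · rw [if_neg (by omega), Sum.inr.injEq, Prod.mk.injEq]
      omega
  right_inv := by
    rintro ⟨m, n⟩
    dsimp only
    split_ifs <;> simp only [Sum.elim_inl, Sum.elim_inr, Prod.mk.injEq] <;> omega

theorem hasSum_jacobiTheta₂_term_mul (z w : ℂ) {τ : ℂ} (hτ : 0 < τ.im) :
    HasSum (fun p : ℤ × ℤ => jacobiTheta₂_term p.1 z τ * jacobiTheta₂_term p.2 w τ)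
      (jacobiTheta₂ z τ * jacobiTheta₂ w τ) := by
  have hz := (hasSum_jacobiTheta₂_term z hτ).summable.norm
  have hw := (hasSum_jacobiTheta₂_term w hτ).summable.norm
  rw [jacobiTheta₂, jacobiTheta₂, tsum_mul_tsum_of_summable_norm hz hw]
  exact (summable_mul_of_summable_norm hz hw).hasSum

theorem jacobiTheta₂_term_mul_even (z w τ : ℂ) (r s : ℤ) :
    jacobiTheta₂_term (r + s) z τ * jacobiTheta₂_term (r - s) w τ =
      jacobiTheta₂_term r (z + w) (2 * τ) * jacobiTheta₂_term s (z - w) (2 * τ) := by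
  simp only [jacobiTheta₂_term, ← exp_add]
  push_cast
  ring_nf

theorem jacobiTheta₂_term_mul_odd (z w τ : ℂ) (r s : ℤ) :
    jacobiTheta₂_term (r + s + 1) z τ * jacobiTheta₂_term (r - s) w τ =
      cexp (2 * π * I * z + π * I * τ) *
        (jacobiTheta₂_term r (z + w + τ) (2 * τ) * jacobiTheta₂_term s (z - w + τ) (2 * τ)) := by
  simp only [jacobiTheta₂_term, ← exp_add]
  push_cast
  ring_nf

theorem jacobiTheta₂_mul_jacobiTheta₂ (z w : ℂ) {τ : ℂ} (hτ : 0 < τ.im) :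
    jacobiTheta₂ z τ * jacobiTheta₂ w τ =
      jacobiTheta₂ (z + w) (2 * τ) * jacobiTheta₂ (z - w) (2 * τ) +
        cexp (2 * π * I * z + π * I * τ) *
          (jacobiTheta₂ (z + w + τ) (2 * τ) * jacobiTheta₂ (z - w + τ) (2 * τ)) := by
  have h2τ : 0 < (2 * τ).im := by simpa using hτ
  have heven := hasSum_jacobiTheta₂_term_mul (z + w) (z - w) h2τ
  have hodd := (hasSum_jacobiTheta₂_term_mul (z + w + τ) (z - w + τ) h2τ).mul_left
    (cexp (2 * π * I * z + π * I * τ))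
  simp only [← jacobiTheta₂_term_mul_even] at heven
  simp only [← jacobiTheta₂_term_mul_odd] at hodd
  exact (hasSum_jacobiTheta₂_term_mul z w hτ).unique
    (sumDiffEquiv.hasSum_iff.1 (HasSum.sum heven hodd))

theorem jtheta_eq_jacobiTheta₂ (τ u : ℂ) :
    jtheta τ u =
      -(cexp (π * I * (τ / 4 + u + 1 / 2)) * jacobiTheta₂ (u + 1 / 2 + τ / 2) τ) := by
  simp only [jtheta, jacobiTheta₂, jacobiTheta₂_term, ← tsum_mul_left, ← exp_add]
  congr! 4 with m
  ring

/-- The even half `∑ r, exp (πiτ (2r)² / 2 + 2πi (2r) x)` of the level-two theta series. -/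
noncomputable def jthetaEven (τ x : ℂ) : ℂ :=
  jacobiTheta₂ (2 * x) (2 * τ)

/-- The odd half `∑ r, exp (πiτ (2r + 1)² / 2 + 2πi (2r + 1) x)` of the level-two theta series. -/
noncomputable def jthetaOdd (τ x : ℂ) : ℂ :=
  cexp (π * I * (τ / 2 + 2 * x)) * jacobiTheta₂ (2 * x + τ) (2 * τ)

theorem jtheta_add_mul_jtheta_sub {τ : ℂ} (hτ : 0 < τ.im) (x y : ℂ) :
    jtheta τ (x + y) * jtheta τ (x - y) =
      jthetaEven τ x * jthetaOdd τ y - jthetaOdd τ x * jthetaEven τ y := by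
  have hprod := jacobiTheta₂_mul_jacobiTheta₂ (x + y + 1 / 2 + τ / 2) (x - y + 1 / 2 + τ / 2) hτ
  have hodd : jacobiTheta₂ (x + y + 1 / 2 + τ / 2 + (x - y + 1 / 2 + τ / 2)) (2 * τ) =
      jacobiTheta₂ (2 * x + τ) (2 * τ) := by
    rw [← jacobiTheta₂_add_left (2 * x + τ)]
    ring_nf
  have heven : jacobiTheta₂ (x + y + 1 / 2 + τ / 2 + (x - y + 1 / 2 + τ / 2) + τ) (2 * τ) =
      cexp (-π * I * (2 * τ + 4 * x + 2)) * jacobiTheta₂ (2 * x) (2 * τ) := by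
    rw [show x + y + 1 / 2 + τ / 2 + (x - y + 1 / 2 + τ / 2) + τ = 2 * x + 1 + 2 * τ by ring,
      jacobiTheta₂_add_left', jacobiTheta₂_add_left]
    ring_nf
  have hdiff : x + y + 1 / 2 + τ / 2 - (x - y + 1 / 2 + τ / 2) = 2 * y := by ring
  rw [hodd, heven, hdiff] at hprod
  rw [jtheta_eq_jacobiTheta₂, jtheta_eq_jacobiTheta₂, neg_mul_neg, mul_mul_mul_comm, hprod,
    jthetaEven, jthetaOdd, jthetaEven, jthetaOdd]
  have hexp_even : cexp (π * I * (τ / 4 + (x + y) + 1 / 2)) *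
      cexp (π * I * (τ / 4 + (x - y) + 1 / 2)) = -cexp (π * I * (τ / 2 + 2 * x)) := by
    rw [← neg_one_mul, ← exp_pi_mul_I, ← exp_add, ← exp_add]
    ring_nf
  have hexp_odd : cexp (π * I * (τ / 2 + 2 * x)) *
      (cexp (2 * π * I * (x + y + 1 / 2 + τ / 2) + π * I * τ) *
        cexp (-π * I * (2 * τ + 4 * x + 2))) = -cexp (π * I * (τ / 2 + 2 * y)) := by
    rw [← neg_one_mul (cexp _), ← exp_neg_pi_mul_I, ← exp_add, ← exp_add, ← exp_add]
    ring_nf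
  rw [hexp_even]
  linear_combination (-(jacobiTheta₂ (2 * x) (2 * τ) * jacobiTheta₂ (2 * y + τ) (2 * τ))) * hexp_odd

theorem jtheta_threeTermIdentity {τ : ℂ} (hτ : 0 < τ.im) : ThreeTermIdentity (jtheta τ) := by
  intro A B C D
  simp only [jtheta_add_mul_jtheta_sub hτ]
  ring

end ThetaFunction

section FunctionAction

variable {K H V : Type*} {Φ : (H → H → K) → (H → V) → H → V}

section Bidegree

variable [AddCommGroup H] {α β : H} {T : (H → V) → H → V}

/-- The dynamical bidegree `(α, β)` of an operator `T`: moving a function of `(λ^{(1)}, λ^{(2)})`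
to the left past `T` shifts its two arguments by `-α` and `-β`. -/
def HasBidegree (Φ : (H → H → K) → (H → V) → H → V) (α β : H) (T : (H → V) → H → V) : Prop :=
  ∀ f w, T (Φ f w) = Φ (fun p q => f (p - α) (q - β)) (T w)

theorem HasBidegree.iterate (hT : HasBidegree Φ α β T) (n : ℕ) :
    HasBidegree Φ (n • α) (n • β) T^[n] := by
  induction n with
  | zero =>
    intro f w
    simp only [Function.iterate_zero, id_eq, zero_smul, sub_zero]
  | succ n ih =>
    intro f w
    simp only [Function.iterate_succ_apply', ih f w, hT _ (T^[n] w), sub_sub, succ_nsmul']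

end Bidegree

variable [CommSemiring K] [AddCommMonoid V] [Module K V]

/-- An action `Φ` on `V`-valued functions of the commutative algebra of functions
`f(λ^{(1)}, λ^{(2)})` of two dynamical variables, in which a function of `λ^{(1)}` alone acts by
pointwise multiplication. -/
structure IsFunctionAction (Φ : (H → H → K) → (H → V) → H → V) : Prop where
  mul : ∀ f g w, Φ (fun p q => f p q * g p q) w = Φ f (Φ g w)
  left : ∀ (φ : H → K) w lam, Φ (fun p _ => φ p) w lam = φ lam • w lam

theorem IsFunctionAction.comm (hΦ : IsFunctionAction Φ) (f g : H → H → K) (w : H → V) :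
    Φ f (Φ g w) = Φ g (Φ f w) := by
  simp only [← hΦ.mul, mul_comm]

theorem IsFunctionAction.map_zero (hΦ : IsFunctionAction Φ) (f : H → H → K) : Φ f 0 = 0 := by
  have hzero : Φ (fun _ _ => 0) 0 = 0 := by
    funext lam
    rw [hΦ.left, Pi.zero_apply, smul_zero]
  rw [← hzero, ← hΦ.mul]
  simp only [mul_zero]

variable [AddCommGroup H] {α β κ : H} {T : (H → V) → H → V} {w : H → V}

/-- A vector on which `λ^{(2)}` acts as `λ - κ`; a vector of weight `μ` in the sense of
representation theory has `κ = γ μ`. -/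
def IsWeightVector (Φ : (H → H → K) → (H → V) → H → V) (κ : H) (w : H → V) : Prop :=
  ∀ f lam, Φ f w lam = f lam (lam - κ) • w lam

theorem IsFunctionAction.hasBidegree_comp (hΦ : IsFunctionAction Φ) (hT : HasBidegree Φ α β T)
    (g : H → H → K) : HasBidegree Φ α β fun w => Φ g (T w) := by
  intro f w
  simp only [hT f w, hΦ.comm g]

theorem HasBidegree.apply_eq_smul (hT : HasBidegree Φ α β T) (hΦ : IsFunctionAction Φ)
    {w w' : H → V} {lam : H} {z : K} (h : w (lam - α) = z • w' (lam - α)) :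
    T w lam = z • T w' lam := by
  classical
  -- `T` need not be additive: only the value of `w` at `lam - α` survives the cut-off by `Φ`.
  have hcut : Φ (fun p _ => if p = lam - α then 1 else 0) w =
      Φ (fun p _ => if p = lam - α then z else 0) w' := by
    funext p
    rw [hΦ.left, hΦ.left]
    split_ifs with hp
    · rw [hp, h, one_smul]
    · rw [zero_smul, zero_smul]
  have hT_cut := congrFun (congrArg T hcut) lam
  rw [hT, hT, hΦ.left (fun p => if p - α = lam - α then 1 else 0),
    hΦ.left (fun p => if p - α = lam - α then z else 0), if_pos rfl, if_pos rfl, one_smul] at hT_cut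
  exact hT_cut

theorem HasBidegree.map_zero (hT : HasBidegree Φ α β T) (hΦ : IsFunctionAction Φ) : T 0 = 0 := by
  funext lam
  rw [hT.apply_eq_smul hΦ (w' := 0) (zero_smul K (0 : V)).symm, zero_smul, Pi.zero_apply]

theorem IsWeightVector.map (hw : IsWeightVector Φ κ w) (hΦ : IsFunctionAction Φ)
    (hT : HasBidegree Φ α β T) : IsWeightVector Φ (κ + α - β) (T w) := by
  intro f lam
  have hf : Φ f (T w) = T (Φ (fun p q => f (p + α) (q + β)) w) := by
    rw [hT]
    simp only [sub_add_cancel]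
  rw [hf]
  refine hT.apply_eq_smul hΦ ?_
  rw [hw, sub_add_cancel, show lam - α - κ + β = lam - (κ + α - β) by abel]

end FunctionAction

theorem sub_single_eq_sub_mul_ite {K ι : Type*} [Ring K] [DecidableEq ι] (p : ι → K) (a : ι)
    (γ : K) : p - Pi.single a γ = fun c => p c - γ * (if c = a then 1 else 0) := by
  funext c
  rw [Pi.sub_apply, Pi.single_apply, mul_ite, mul_one, mul_zero]

section EllipticModule

variable {K ι V : Type*} [Field K] [AddCommGroup V] [Module K V]

/-- The defining relations of a module over the small elliptic quantum group, for a theta function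
`θ`, generators `t a b` and an action `Φ` of the functions of `(λ^{(1)}, λ^{(2)})`; the column and
exchange relations have their denominators cleared. -/
structure IsSmallEllipticModule [DecidableEq ι] (θ : K → K) (γ : K)
    (t : ι → ι → ((ι → K) → V) → (ι → K) → V)
    (Φ : ((ι → K) → (ι → K) → K) → ((ι → K) → V) → (ι → K) → V) : Prop
    extends IsFunctionAction Φ where
  hasBidegree : ∀ a b, HasBidegree Φ (Pi.single a γ) (Pi.single b γ) (t a b)
  row : ∀ a b c w, t a b (t a c w) = t a c (t a b w)
  column : ∀ a b c w, a ≠ b →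
    Φ (fun p _ => θ (p a - p b - γ)) (t a c (t b c w)) =
      Φ (fun p _ => θ (p a - p b + γ)) (t b c (t a c w))
  exchange : ∀ a b c d w, a ≠ c → b ≠ d →
    Φ (fun p q => θ (q b - q d + γ) * θ (p a - p c)) (t a b (t c d w)) -
        Φ (fun p q => θ (p a - p c + γ) * θ (q b - q d)) (t c d (t a b w)) =
      Φ (fun p q => θ (p a - p c + (q b - q d)) * θ γ) (t a d (t c b w))

namespace IsSmallEllipticModule

variable [DecidableEq ι] {θ : K → K} {t : ι → ι → ((ι → K) → V) → (ι → K) → V}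
  {Φ : ((ι → K) → (ι → K) → K) → ((ι → K) → V) → (ι → K) → V} {γ : K} {a b c d : ι}
  {κ lam : ι → K} {w : (ι → K) → V}

theorem exchange_apply (h : IsSmallEllipticModule θ γ t Φ) (hθ : θ.Odd) (hab : a ≠ b)
    (hcd : c ≠ d) (hT₁ : IsWeightVector Φ κ (t a d (t b c w)))
    (hT₂ : IsWeightVector Φ κ (t b c (t a d w))) (hT₃ : IsWeightVector Φ κ (t a c (t b d w)))
    {p q : K} (hp : p = lam a - lam b) (hq : q = (lam - κ) c - (lam - κ) d)
    (hp0 : θ p ≠ 0) (hqγ : θ (q - γ) ≠ 0) :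
    t a d (t b c w) lam =
      (θ (p + γ) * θ q / (θ p * θ (q - γ))) • t b c (t a d w) lam -
        (θ (p - q) * θ γ / (θ p * θ (q - γ))) • t a c (t b d w) lam := by
  have hrel := congrFun (h.exchange a d b c w hab hcd.symm) lam
  rw [Pi.sub_apply, hT₁, hT₂, hT₃, ← hp, ← neg_sub ((lam - κ) c), ← hq, ← sub_eq_add_neg,
    neg_add_eq_sub, ← neg_sub q, hθ, hθ] at hrel
  linear_combination (norm := (match_scalars <;> field)) (-(θ p * θ (q - γ))⁻¹) • hrel

theorem isWeightVector_comp (h : IsSmallEllipticModule θ γ t Φ) (hw : IsWeightVector Φ κ w)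
    {κ' : ι → K} (hκ : κ' = κ + Pi.single a γ + Pi.single c γ - Pi.single b γ - Pi.single d γ) :
    IsWeightVector Φ κ' (t a b (t c d w)) := by
  have hcd := hw.map h.toIsFunctionAction (h.hasBidegree c d)
  convert hcd.map h.toIsFunctionAction (h.hasBidegree a b) using 1
  rw [hκ]
  abel

end IsSmallEllipticModule

theorem sub_weight_apply_sub [DecidableEq ι] {a b : ι} (hab : a ≠ b) (lam κ : ι → K) (s : K) :
    (lam - (κ + Pi.single b s - Pi.single a s) : ι → K) a -
        (lam - (κ + Pi.single b s - Pi.single a s) : ι → K) b =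
      lam a - lam b - (κ a - κ b) + 2 * s := by
  simp only [Pi.sub_apply, Pi.add_apply, Pi.single_eq_same, Pi.single_eq_of_ne hab,
    Pi.single_eq_of_ne hab.symm]
  ring

variable [LinearOrder ι] [LocallyFiniteOrderBot ι]

/-- The factor `∏_{c < a} θ(λ_{ca})` entering the modified generators. -/
def thetaProd (θ : K → K) (a : ι) (p : ι → K) : K :=
  ∏ c ∈ Finset.Iio a, θ (p c - p a)

theorem thetaProd_eq_prod_ite (θ : K → K) {N : ℕ} (a : Fin N) (p : Fin N → K) :
    thetaProd θ a p = ∏ c : Fin N, if (c : ℕ) < (a : ℕ) then θ (p c - p a) else 1 := by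
  simp only [thetaProd, ← Finset.prod_filter, Fin.val_fin_lt, Finset.filter_gt_eq_Iio]

section ThetaProd

variable (θ : K → K) {a b : ι} (p : ι → K) (x : K)

theorem thetaProd_sub_single_of_lt (hab : a < b) :
    thetaProd θ a (p - Pi.single b x) = thetaProd θ a p := by
  refine Finset.prod_congr rfl fun c hc => ?_
  have hcb : c ≠ b := ((Finset.mem_Iio.1 hc).trans hab).ne
  rw [Pi.sub_apply, Pi.sub_apply, Pi.single_eq_of_ne hcb, Pi.single_eq_of_ne hab.ne, sub_zero,
    sub_zero]

theorem mul_thetaProd_sub_single (hab : a < b) :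
    θ (p a - p b) * thetaProd θ b (p - Pi.single a x) =
      θ (p a - p b - x) * thetaProd θ b p := by
  have herase : ∏ c ∈ (Finset.Iio b).erase a,
      θ ((p - Pi.single a x : ι → K) c - (p - Pi.single a x : ι → K) b) =
        ∏ c ∈ (Finset.Iio b).erase a, θ (p c - p b) := by
    refine Finset.prod_congr rfl fun c hc => ?_
    rw [Pi.sub_apply, Pi.sub_apply, Pi.single_eq_of_ne (Finset.ne_of_mem_erase hc),
      Pi.single_eq_of_ne hab.ne', sub_zero, sub_zero]
  rw [thetaProd, thetaProd, ← Finset.mul_prod_erase _ _ (Finset.mem_Iio.2 hab),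
    ← Finset.mul_prod_erase _ _ (Finset.mem_Iio.2 hab), herase, Pi.sub_apply, Pi.sub_apply,
    Pi.single_eq_same, Pi.single_eq_of_ne hab.ne', sub_zero, sub_right_comm]
  ring

variable {θ p x}

theorem thetaProd_sub_single (hab : a < b) (hp : θ (p a - p b) ≠ 0) :
    thetaProd θ b (p - Pi.single a x) =
      θ (p a - p b - x) / θ (p a - p b) * thetaProd θ b p := by
  rw [div_mul_eq_mul_div, ← mul_thetaProd_sub_single θ p x hab, mul_div_cancel_left₀ _ hp]

theorem thetaProd_inv_eq (hab : a < b) (hp : θ (p a - p b) ≠ 0) (hpx : θ (p a - p b - x) ≠ 0) :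
    (thetaProd θ b p)⁻¹ =
      θ (p a - p b - x) / θ (p a - p b) * (thetaProd θ b (p - Pi.single a x))⁻¹ := by
  rw [thetaProd_sub_single hab hp]
  field

end ThetaProd

variable (θ : K → K) (t : ι → ι → ((ι → K) → V) → (ι → K) → V)
  (Φ : ((ι → K) → (ι → K) → K) → ((ι → K) → V) → (ι → K) → V)

/-- The modified generators `t̂_{ab}`. -/
def hat (a b : ι) (w : (ι → K) → V) : (ι → K) → V :=
  Φ (fun p q => thetaProd θ a p * (thetaProd θ b q)⁻¹) (t a b w)

/-- The generator `t_{ab}` modified only by its row factor `∏_{c < a} θ(λ^{(1)}_{ca})`. -/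
def leftHat (a b : ι) (w : (ι → K) → V) : (ι → K) → V :=
  Φ (fun p _ => thetaProd θ a p) (t a b w)

variable {θ t Φ} {γ : K} {a b c d : ι} {κ lam : ι → K} {v w : (ι → K) → V}

namespace IsSmallEllipticModule

theorem hat_hasBidegree (h : IsSmallEllipticModule θ γ t Φ) (a b : ι) :
    HasBidegree Φ (Pi.single a γ) (Pi.single b γ) (hat θ t Φ a b) :=
  h.hasBidegree_comp (h.hasBidegree a b) _

theorem leftHat_hasBidegree (h : IsSmallEllipticModule θ γ t Φ) (a b : ι) :
    HasBidegree Φ (Pi.single a γ) (Pi.single b γ) (leftHat θ t Φ a b) :=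
  h.hasBidegree_comp (h.hasBidegree a b) _

theorem hat_eq_leftHat (h : IsSmallEllipticModule θ γ t Φ) (a b : ι) (w : (ι → K) → V) :
    hat θ t Φ a b w = Φ (fun _ q => (thetaProd θ b q)⁻¹) (leftHat θ t Φ a b w) := by
  rw [hat, leftHat, ← h.mul]
  simp only [mul_comm]

theorem hat_hat (h : IsSmallEllipticModule θ γ t Φ) (a b c d : ι) (w : (ι → K) → V) :
    hat θ t Φ a b (hat θ t Φ c d w) =
      Φ (fun p q => thetaProd θ a p * (thetaProd θ b q)⁻¹ *
          (thetaProd θ c (p - Pi.single a γ) * (thetaProd θ d (q - Pi.single b γ))⁻¹))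
        (t a b (t c d w)) := by
  rw [hat, hat, h.hasBidegree a b, ← h.mul]

theorem commute_column (h : IsSmallEllipticModule θ γ t Φ) (hab : a < b) (c : ι) :
    Function.Commute (fun w => Φ (fun p _ => θ (p a - p b)) (hat θ t Φ a c w))
      (hat θ t Φ b c) := by
  intro w
  dsimp only
  rw [h.hat_hasBidegree b c, h.hat_hat, h.hat_hat, ← h.mul, ← h.mul]
  have key := congrArg (Φ fun p q => thetaProd θ a p * thetaProd θ b p *
    ((thetaProd θ c q)⁻¹ * (thetaProd θ c (q - Pi.single c γ))⁻¹)) (h.column a b c w hab.ne)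
  rw [← h.mul, ← h.mul] at key
  convert key using 2 <;> funext p q
  · linear_combination (thetaProd θ a p * ((thetaProd θ c q)⁻¹ *
      (thetaProd θ c (q - Pi.single c γ))⁻¹)) * mul_thetaProd_sub_single θ p γ hab
  · simp only [thetaProd_sub_single_of_lt θ p γ hab, Pi.sub_apply, Pi.single_eq_same,
      Pi.single_eq_of_ne hab.ne, sub_zero, sub_sub_eq_add_sub, add_sub_right_comm]
    ring

theorem commute_leftHat (h : IsSmallEllipticModule θ γ t Φ) (hab : a < b) (c : ι) :
    Function.Commute (leftHat θ t Φ c b) (hat θ t Φ c a) := by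
  intro w
  rw [leftHat, hat, h.hasBidegree c b, leftHat, hat, h.hasBidegree c a, ← h.mul, ← h.mul, h.row]
  simp only [thetaProd_sub_single_of_lt θ _ γ hab]
  congr 1
  funext p q
  ring

theorem hat_iterate_hasBidegree (h : IsSmallEllipticModule θ γ t Φ) (a b : ι) (k : ℕ) :
    HasBidegree Φ (Pi.single a (k * γ)) (Pi.single b (k * γ)) (hat θ t Φ a b)^[k] := by
  simpa only [← Pi.single_smul, nsmul_eq_mul] using (h.hat_hasBidegree a b).iterate k

theorem hat_diag_col_iterate (h : IsSmallEllipticModule θ γ t Φ) (hab : a < b)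
    (hv : hat θ t Φ a a v = v) (k : ℕ) {x : K} (hx : x = lam a - lam b) (hx0 : θ x ≠ 0) :
    hat θ t Φ a a ((hat θ t Φ b a)^[k] v) lam =
      (θ (x + k * γ) / θ x) • (hat θ t Φ b a)^[k] v lam := by
  have hcomm := (h.commute_column hab a).iterate_right k v
  have hshift := h.hat_iterate_hasBidegree b a k (fun p _ => θ (p a - p b)) v
  simp only [Pi.sub_apply, Pi.single_eq_same, Pi.single_eq_of_ne hab.ne, sub_zero,
    sub_sub_eq_add_sub, add_sub_right_comm] at hshift
  rw [hv, hshift] at hcomm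
  have hlam := congrFun hcomm lam
  rw [h.left (fun p => θ (p a - p b)), h.left (fun p => θ (p a - p b + k * γ)), ← hx] at hlam
  rw [div_eq_inv_mul, mul_smul, ← hlam, inv_smul_smul₀ hx0]

theorem hat_diag_row_iterate (h : IsSmallEllipticModule θ γ t Φ) (hab : a < b)
    (hw : IsWeightVector Φ κ v) (hv : hat θ t Φ b b v = v) (k : ℕ) {q : K}
    (hq : q = lam a - lam b - (κ a - κ b) + 2 * k * γ) (hq0 : θ q ≠ 0)
    (hqγ : θ (q - k * γ) ≠ 0) :
    hat θ t Φ b b ((hat θ t Φ b a)^[k] v) lam =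
      (θ (q - k * γ) / θ q) • (hat θ t Φ b a)^[k] v lam := by
  set u := leftHat θ t Φ b b v
  have hu : IsWeightVector Φ κ u := by
    simpa only [add_sub_cancel_right] using hw.map h.toIsFunctionAction (h.leftHat_hasBidegree b b)
  have hvu : Φ (fun _ q => (thetaProd θ b q)⁻¹) u = v := by rw [← h.hat_eq_leftHat, hv]
  have hcomm : leftHat θ t Φ b b ((hat θ t Φ b a)^[k] v) = (hat θ t Φ b a)^[k] u :=
    (h.commute_leftHat hab b).iterate_right k v
  have hiter : (hat θ t Φ b a)^[k] v =
      Φ (fun _ q => (thetaProd θ b (q - Pi.single a (k * γ)))⁻¹) ((hat θ t Φ b a)^[k] u) := by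
    rw [← h.hat_iterate_hasBidegree b a k (fun _ q => (thetaProd θ b q)⁻¹), hvu]
  rw [mul_assoc, ← sub_weight_apply_sub hab.ne lam κ] at hq
  have hku := hu.map h.toIsFunctionAction (h.hat_iterate_hasBidegree b a k)
  rw [h.hat_eq_leftHat, hcomm, hiter, hku, hku, smul_smul, hq,
    thetaProd_inv_eq hab (hq ▸ hq0) (hq ▸ hqγ)]

theorem hat_exchange (h : IsSmallEllipticModule θ γ t Φ) (hθ : θ.Odd) (hab : a < b) (hcd : c < d)
    (hw : IsWeightVector Φ κ w) {κ' : ι → K}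
    (hκ : κ' = κ + Pi.single a γ + Pi.single b γ - Pi.single c γ - Pi.single d γ)
    {p q : K} (hp : p = lam a - lam b) (hq : q = (lam - κ') c - (lam - κ') d)
    (hp0 : θ p ≠ 0) (hq0 : θ q ≠ 0) (hqγ : θ (q - γ) ≠ 0) :
    hat θ t Φ a d (hat θ t Φ b c w) lam =
      (θ (p + γ) * θ (p - γ) / θ p ^ 2) • hat θ t Φ b c (hat θ t Φ a d w) lam -
        (θ (p - q) * θ γ / (θ p * θ q)) • hat θ t Φ a c (hat θ t Φ b d w) lam := by
  have hT₁ : IsWeightVector Φ κ' (t a d (t b c w)) :=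
    h.isWeightVector_comp hw (by rw [hκ]; abel)
  have hT₂ : IsWeightVector Φ κ' (t b c (t a d w)) :=
    h.isWeightVector_comp hw (by rw [hκ]; abel)
  have hT₃ : IsWeightVector Φ κ' (t a c (t b d w)) :=
    h.isWeightVector_comp hw (by rw [hκ])
  have hrow := thetaProd_sub_single (θ := θ) (p := lam) (x := γ) hab (hp ▸ hp0)
  have hcolumn := thetaProd_sub_single (θ := θ) (p := lam - κ') (x := γ) hcd (hq ▸ hq0)
  rw [← hp] at hrow
  rw [← hq] at hcolumn
  rw [h.hat_hat, h.hat_hat, h.hat_hat, hT₁, hT₂, hT₃, hrow, hcolumn,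
    thetaProd_sub_single_of_lt _ _ _ hab, thetaProd_sub_single_of_lt _ _ _ hcd,
    h.exchange_apply hθ hab.ne hcd.ne hT₁ hT₂ hT₃ hp hq hp0 hqγ]
  match_scalars <;> field

theorem hat_hat_iterate (h : IsSmallEllipticModule θ γ t Φ) (hθ : θ.Odd) (hab : a < b)
    (hw : IsWeightVector Φ κ v) (hva : hat θ t Φ a a v = v) (hvb : hat θ t Φ b b v = v) {k : ℕ}
    {x q : K} (hx : x = lam a - lam b) (hq : q = x - (κ a - κ b) + 2 * k * γ) (hx0 : θ x ≠ 0)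
    (hq0 : θ q ≠ 0) (hqγ : θ (q - γ) ≠ 0) (hqk : θ (q - γ - k * γ) ≠ 0) :
    hat θ t Φ a b ((hat θ t Φ b a)^[k + 1] v) lam =
      (θ (x + γ) * θ (x - γ) / θ x ^ 2) •
          hat θ t Φ b a (hat θ t Φ a b ((hat θ t Φ b a)^[k] v)) lam -
        (θ (x - q) * θ γ / (θ x * θ q) *
          (θ (q - γ - k * γ) / θ (q - γ) * (θ (x + k * γ) / θ x))) •
            (hat θ t Φ b a)^[k] v lam := by
  have hdiag : hat θ t Φ a a (hat θ t Φ b b ((hat θ t Φ b a)^[k] v)) lam =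
      (θ (q - γ - k * γ) / θ (q - γ)) • hat θ t Φ a a ((hat θ t Φ b a)^[k] v) lam := by
    refine (h.hat_hasBidegree a a).apply_eq_smul h.toIsFunctionAction
      (h.hat_diag_row_iterate hab hw hvb k ?_ hqγ hqk)
    rw [hq, hx, Pi.sub_apply, Pi.sub_apply, Pi.single_eq_same, Pi.single_eq_of_ne hab.ne']
    ring
  have hκ := hw.map h.toIsFunctionAction (h.hat_iterate_hasBidegree b a k)
  rw [mul_assoc, hx, ← sub_weight_apply_sub hab.ne lam κ] at hq
  rw [Function.iterate_succ_apply', h.hat_exchange hθ hab hab hκ (by abel) hx hq hx0 hq0 hqγ,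
    hdiag, h.hat_diag_col_iterate hab hva k hx hx0, smul_smul, smul_smul, ← mul_assoc]

theorem hat_raise_iterate_succ [NeZero (2 : K)] (h : IsSmallEllipticModule θ γ t Φ)
    (hθ : ThreeTermIdentity θ) (hab : a < b) (hw : IsWeightVector Φ κ v)
    (hva : hat θ t Φ a a v = v) (hvb : hat θ t Φ b b v = v) {k : ℕ}
    (hx : IsGeneric θ γ (2 * k + 1) (lam a - lam b))
    (hy : IsGeneric θ γ (2 * k + 1) (lam a - lam b - (κ a - κ b)))
    (hprev : hat θ t Φ b a (hat θ t Φ a b ((hat θ t Φ b a)^[k] v)) lam =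
      raisingCoeff θ γ k (lam a - lam b + γ) (κ a - κ b) • (hat θ t Φ b a)^[k] v lam) :
    hat θ t Φ a b ((hat θ t Φ b a)^[k + 1] v) lam =
      raisingCoeff θ γ (k + 1) (lam a - lam b) (κ a - κ b) • (hat θ t Φ b a)^[k] v lam := by
  set x := lam a - lam b with hx_def
  obtain ⟨q, hq⟩ : ∃ q, q = x - (κ a - κ b) + 2 * k * γ := ⟨_, rfl⟩
  have hx0 : θ x ≠ 0 := by simpa using hx 0 (by omega)
  have hxγ : θ (x + γ) ≠ 0 := by simpa using hx 1 (by omega)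
  have hq0 : θ q ≠ 0 := by simpa [hq] using hy (2 * k) (by omega)
  have hqγ : θ (q - γ) ≠ 0 := by
    convert hy (2 * k - 1) (by omega) using 2
    push_cast
    rw [hq]
    ring
  have hqk : θ (q - γ - k * γ) ≠ 0 := by
    convert hy (k - 1) (by omega) using 2
    push_cast
    rw [hq]
    ring
  rw [h.hat_hat_iterate hθ.odd hab hw hva hvb hx_def hq hx0 hq0 hqγ hqk, hprev, smul_smul,
    ← sub_smul, ← hθ.raisingCoeff_succ hq hx0 hxγ hq0 hqγ]

theorem hat_lower_raise_iterate [NeZero (2 : K)] (h : IsSmallEllipticModule θ γ t Φ)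
    (hθ : ThreeTermIdentity θ) (hab : a < b) (hw : IsWeightVector Φ κ v)
    (hsing : t a b v = 0) (hva : hat θ t Φ a a v = v) (hvb : hat θ t Φ b b v = v) (k : ℕ)
    (lam : ι → K) (hx : IsGeneric θ γ (2 * k) (lam a - lam b))
    (hy : IsGeneric θ γ (2 * k) (lam a - lam b - (κ a - κ b))) :
    hat θ t Φ b a (hat θ t Φ a b ((hat θ t Φ b a)^[k] v)) lam =
      raisingCoeff θ γ k (lam a - lam b + γ) (κ a - κ b) • (hat θ t Φ b a)^[k] v lam := by
  induction k generalizing lam with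
  | zero =>
    have hzero : hat θ t Φ a b v = 0 := by rw [hat, hsing, h.map_zero]
    rw [Function.iterate_zero, id_eq, hzero,
      (h.hat_hasBidegree b a).map_zero h.toIsFunctionAction, raisingCoeff_zero hθ.map_zero,
      zero_smul, Pi.zero_apply]
  | succ k ih =>
    have hlam : (lam - Pi.single b γ : ι → K) a - (lam - Pi.single b γ : ι → K) b =
        lam a - lam b + γ := by
      rw [Pi.sub_apply, Pi.sub_apply, Pi.single_eq_same, Pi.single_eq_of_ne hab.ne]
      ring
    have hx' : IsGeneric θ γ (2 * k + 1) (lam a - lam b + γ) := hx.add_right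
    have hy' : IsGeneric θ γ (2 * k + 1) (lam a - lam b + γ - (κ a - κ b)) := by
      rw [add_sub_right_comm]
      exact hy.add_right
    rw [← hlam] at hx' hy'
    rw [Function.iterate_succ_apply' _ k v, ← hlam]
    refine (h.hat_hasBidegree b a).apply_eq_smul h.toIsFunctionAction ?_
    rw [← Function.iterate_succ_apply' (hat θ t Φ b a)]
    exact h.hat_raise_iterate_succ hθ hab hw hva hvb hx' hy'
      (ih _ (hx'.mono (Nat.le_succ _)) (hy'.mono (Nat.le_succ _)))

end IsSmallEllipticModule

theorem singular_vector_lowering_general [NeZero (2 : K)] (h : IsSmallEllipticModule θ γ t Φ)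
    (hθ : ThreeTermIdentity θ) (hab : a < b) (hw : IsWeightVector Φ κ v)
    (hsing : t a b v = 0) (hva : hat θ t Φ a a v = v) (hvb : hat θ t Φ b b v = v) (k : ℕ)
    (hx : IsGeneric θ γ (2 * k + 1) (lam a - lam b))
    (hy : IsGeneric θ γ (2 * k + 1) (lam a - lam b - (κ a - κ b))) :
    hat θ t Φ a b ((hat θ t Φ b a)^[k + 1] v) lam =
      raisingCoeff θ γ (k + 1) (lam a - lam b) (κ a - κ b) • (hat θ t Φ b a)^[k] v lam :=
  h.hat_raise_iterate_succ hθ hab hw hva hvb hx hy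
    (h.hat_lower_raise_iterate hθ hab hw hsing hva hvb k lam (hx.mono (Nat.le_succ _))
      (hy.mono (Nat.le_succ _)))

end EllipticModule

/-- Let `v` be a standard regular singular vector of weight `μ` in a module over the small
elliptic quantum group `e_{τ,γ}(sl_N)`, and `a < b`.  Then for `k ≥ 1`,
`t̂_{ab} t̂_{ba}^k v = -[θ((μ_{ab}-k+1)γ) θ(kγ) / (θ(λ_{ab}) θ(λ_{ab}-(μ_{ab}-2k+2)γ))] ·
t̂_{ba}^{k-1} v`  (at generic `λ`).

A module over `e_{τ,γ}(sl_N)` on `Fun(V) = (h* → V)` is encoded by the action `t` of the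
generators `t_{ab}`, the action `Φ` of functions `f(λ^{(1)},λ^{(2)})`, and the relations
(tf), (tbc), (tab), (tac) of the operator algebra `e^𝒪_{τ,γ}(sl_N)` (the latter two with
denominators cleared); `t̂_{ab}` are the modified generators. -/
theorem singular_vector_lowering (N : ℕ) (τ γ : ℂ) (hτ : 0 < τ.im) (hγ : γ ≠ 0)
    (V : Type*) [AddCommGroup V] [Module ℂ V]
    (t : Fin N → Fin N → ((Fin N → ℂ) → V) → ((Fin N → ℂ) → V))
    (Φ : ((Fin N → ℂ) → (Fin N → ℂ) → ℂ) → ((Fin N → ℂ) → V) → ((Fin N → ℂ) → V))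
    (that : Fin N → Fin N → ((Fin N → ℂ) → V) → ((Fin N → ℂ) → V))
    -- the action of the function algebra
    (hΦmul : ∀ f g w, Φ (fun p q => f p q * g p q) w = Φ f (Φ g w))
    (hΦadd : ∀ f g w, Φ (fun p q => f p q + g p q) w = Φ f w + Φ g w)
    (hΦone : ∀ (φ : (Fin N → ℂ) → ℂ) w lam, Φ (fun p _ => φ p) w lam = φ lam • w lam)
    -- relation (tf)
    (htf : ∀ a b f w, t a b (Φ f w) =
      Φ (fun p q => f (fun c => p c - γ * (if c = a then 1 else 0))
                      (fun c => q c - γ * (if c = b then 1 else 0))) (t a b w))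
    -- relation (tbc)
    (htbc : ∀ a b c w, t a b (t a c w) = t a c (t a b w))
    -- relation (tab), denominators cleared
    (htab : ∀ a b c w, a ≠ b →
      Φ (fun p _ => jtheta τ (p a - p b - γ)) (t a c (t b c w)) =
        Φ (fun p _ => jtheta τ (p a - p b + γ)) (t b c (t a c w)))
    -- relation (tac), denominators cleared
    (htac : ∀ a b c d w, a ≠ c → b ≠ d →
      Φ (fun p q => jtheta τ (q b - q d + γ) * jtheta τ (p a - p c)) (t a b (t c d w)) -
          Φ (fun p q => jtheta τ (p a - p c + γ) * jtheta τ (q b - q d)) (t c d (t a b w)) =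
        Φ (fun p q => jtheta τ ((p a - p c) + (q b - q d)) * jtheta τ γ) (t a d (t c b w)))
    -- the modified generators t̂_{ab}
    (hthat : ∀ a b w, that a b w =
      Φ (fun p q =>
          (∏ c : Fin N, if (c : ℕ) < (a : ℕ) then jtheta τ (p c - p a) else 1) *
            (∏ c : Fin N, if (c : ℕ) < (b : ℕ) then jtheta τ (q c - q b) else 1)⁻¹)
        (t a b w))
    -- `v` is a standard regular singular vector of weight `μ`
    (v : (Fin N → ℂ) → V) (μ : Fin N → ℂ) (hv0 : v ≠ 0)
    (hsing : ∀ a b : Fin N, a < b → t a b v = 0)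
    (hwt : ∀ f, Φ f v = fun lam => f lam (fun c => lam c - γ * μ c) • v lam)
    (hstd : ∀ a, that a a v = v)
    (a b : Fin N) (hab : a < b) (k : ℕ) (hk : 1 ≤ k) :
    ∀ lam : Fin N → ℂ,
      (∀ j : ℤ, j.natAbs ≤ 2 * k + 2 →
        jtheta τ (lam a - lam b + (j : ℂ) * γ) ≠ 0 ∧
          jtheta τ (lam a - lam b - ((μ a - μ b) + (j : ℂ)) * γ) ≠ 0) →
      that a b ((that b a)^[k] v) lam =
        (-(jtheta τ (((μ a - μ b) - (k : ℂ) + 1) * γ) * jtheta τ ((k : ℂ) * γ)) /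
            (jtheta τ (lam a - lam b) *
              jtheta τ (lam a - lam b - ((μ a - μ b) - 2 * (k : ℂ) + 2) * γ))) •
          ((that b a)^[k - 1] v) lam := by
  intro lam hgen
  obtain ⟨n, rfl⟩ : ∃ n, k = n + 1 := ⟨k - 1, by omega⟩
  have h : IsSmallEllipticModule (jtheta τ) γ t Φ :=
    { mul := hΦmul, left := hΦone, row := htbc, column := htab, exchange := htac
      hasBidegree a b f w := by simp only [sub_single_eq_sub_mul_ite, htf] }
  obtain rfl : that = hat (jtheta τ) t Φ := by
    funext a b w
    simp only [hthat, hat, thetaProd_eq_prod_ite]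
  have hweight : IsWeightVector Φ (γ • μ) v := fun f lam => congrFun (hwt f) lam
  have hx : IsGeneric (jtheta τ) γ (2 * n + 1) (lam a - lam b) :=
    fun j hj => (hgen j (by omega)).1
  have hy : IsGeneric (jtheta τ) γ (2 * n + 1) (lam a - lam b - ((γ • μ) a - (γ • μ) b)) := by
    intro j hj
    convert (hgen (-j) (by omega)).2 using 2
    simp only [Pi.smul_apply, smul_eq_mul, Int.cast_neg]
    ring
  rw [singular_vector_lowering_general h (jtheta_threeTermIdentity hτ) hab hweight
    (hsing a b hab) (hstd a) (hstd b) n hx hy, raisingCoeff, Nat.add_sub_cancel]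
  simp only [Pi.smul_apply, smul_eq_mul]
  ring_nf
end
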